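/- A shift space X ⊆ 𝒜^∞ is d̄_M-stable if and only if for every ε > 0 there exist δ > 0 and N ∈ ℕ such that for every σ-invariant Borel probability measure ν on 𝒜^∞ and every n ≥ N, if ν(U_n(X)) > 1 − δ then inf_{μ ∈ M_σ(X)} d̄_M(ν, μ) < ε. -/

import Mathlib

open MeasureTheory Filter Topology

namespace DbarPaper

variable {A : Type} [Fintype A] [DecidableEq A] [Inhabited A]
  [TopologicalSpace A] [DiscreteTopology A]
  [MeasurableSpace A] [MeasurableSingletonClass A]

/-- The shift map on the full shift `𝒜^∞ = ℕ → A`. -/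
def shift : (ℕ → A) → (ℕ → A) := fun x n => x (n + 1)

/-- A shift space: a nonempty, closed, shift-invariant subset of the full shift. -/
def ShiftSpace (X : Set (ℕ → A)) : Prop :=
  X.Nonempty ∧ IsClosed X ∧ ∀ x ∈ X, shift x ∈ X

/-- The word `w` appears in the sequence `x`. -/
def occursIn (w : List A) (x : ℕ → A) : Prop :=
  ∃ i : ℕ, w = List.ofFn (fun k : Fin w.length => x (i + (k : ℕ)))

/-- The language of a set `X`: all finite words appearing in points of `X`. -/
def lang (X : Set (ℕ → A)) : Set (List A) := {w | ∃ x ∈ X, occursIn w x}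

/-- Words of length `n` in the language of `X`. -/
def langN (n : ℕ) (X : Set (ℕ → A)) : Set (List A) := {w | w ∈ lang X ∧ w.length = n}

/-- The pseudometric `d̄` on the full shift. -/
noncomputable def dbar (x y : ℕ → A) : ℝ :=
  Filter.limsup
    (fun n => (((Finset.range n).filter (fun j => x j ≠ y j)).card : ℝ) / (n : ℝ))
    Filter.atTop

/-- Hausdorff "distance" between two sets induced by a `ℝ`-valued distance. -/
noncomputable def hausdist {Z : Type*} (d : Z → Z → ℝ) (P Q : Set Z) : ℝ :=
  max (⨆ p : P, ⨅ q : Q, d p q) (⨆ q : Q, ⨅ p : P, d p q)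

/-- A probability measure is shift-invariant. -/
def invariantPM (μ : ProbabilityMeasure (ℕ → A)) : Prop :=
  (μ : Measure (ℕ → A)).map shift = (μ : Measure (ℕ → A))

/-- `M_σ(X)`: shift-invariant Borel probability measures giving `X` full measure. -/
def Msigma (X : Set (ℕ → A)) : Set (ProbabilityMeasure (ℕ → A)) :=
  {μ | invariantPM μ ∧ μ X = 1}

/-- `ξ` is a joining of `μ` and `ν`: a `σ×σ`-invariant measure on the product with
marginals `μ` and `ν`. -/
def IsJoining (ξ : Measure ((ℕ → A) × (ℕ → A))) (μ ν : ProbabilityMeasure (ℕ → A)) : Prop :=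
  ξ.map (Prod.map shift shift) = ξ ∧
  ξ.map Prod.fst = (μ : Measure (ℕ → A)) ∧ ξ.map Prod.snd = (ν : Measure (ℕ → A))

/-- Ornstein's metric `d̄_M` on invariant measures. -/
noncomputable def dbarM (μ ν : ProbabilityMeasure (ℕ → A)) : ℝ :=
  sInf {r : ℝ | ∃ ξ : Measure ((ℕ → A) × (ℕ → A)),
    IsJoining ξ μ ν ∧ r = (ξ {p | p.1 0 ≠ p.2 0}).toReal}

/-- `d̄_M`-stability of a shift space (Austin). -/
def DbarMStable (X : Set (ℕ → A)) : Prop :=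
  ∀ ε : ℝ, 0 < ε → ∃ U : Set (ProbabilityMeasure (ℕ → A)), IsOpen U ∧ Msigma X ⊆ U ∧
    ∀ ν ∈ U, invariantPM ν → ∃ μ ∈ Msigma X, dbarM μ ν < ε

/-- The infinite concatenation of a sequence of (nonempty) words. -/
def concatSeq (w : ℕ → List A) : ℕ → A := fun n =>
  ((List.ofFn (fun i : Fin (n + 1) => w (i : ℕ))).flatten).getD n default

/-- The `d̄`-shadowing property. -/
def DbarShadowing (X : Set (ℕ → A)) : Prop :=
  ∀ ε : ℝ, 0 < ε → ∃ N : ℕ, 0 < N ∧ ∀ w : ℕ → List A,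
    (∀ j, w j ∈ lang X) → (∀ j, N ≤ (w j).length) →
    ∃ x' ∈ X, dbar (concatSeq w) x' < ε

/-- `U_n(X)`: the union of cylinders of words of length `n` in the language of `X`. -/
def cylNbhd (X : Set (ℕ → A)) (n : ℕ) : Set (ℕ → A) :=
  {x | List.ofFn (fun k : Fin n => x (k : ℕ)) ∈ lang X}

/-- The `n`-th (topological) Markov approximation of `X`: all sequences whose subwords of
length `n+1` belong to the language of `X`. -/
def markovApprox (X : Set (ℕ → A)) (n : ℕ) : Set (ℕ → A) :=
  {x | ∀ i : ℕ, List.ofFn (fun k : Fin (n + 1) => x (i + (k : ℕ))) ∈ lang X}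

/-- Transitivity, in terms of the language. -/
def TransitiveShift (X : Set (ℕ → A)) : Prop :=
  ∀ u ∈ lang X, ∀ w ∈ lang X, ∃ v : List A, u ++ v ++ w ∈ lang X

/-- Topological mixing, in terms of the language. -/
def MixingShift (X : Set (ℕ → A)) : Prop :=
  ∀ u ∈ lang X, ∀ w ∈ lang X, ∃ N : ℕ, ∀ m : ℕ, N ≤ m →
    ∃ v : List A, v.length = m ∧ u ++ v ++ w ∈ lang X

/-- Chain mixing: all but finitely many Markov approximations are topologically mixing. -/
def ChainMixing (X : Set (ℕ → A)) : Prop :=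
  ∃ N : ℕ, ∀ n : ℕ, N ≤ n → MixingShift (markovApprox X n)

/-- `C` is the measure center of `X`: the smallest shift space contained in `X` of full
measure for every invariant measure of `X`. -/
def IsMeasureCenter (X C : Set (ℕ → A)) : Prop :=
  ShiftSpace C ∧ C ⊆ X ∧ (∀ μ ∈ Msigma X, μ C = 1) ∧
  ∀ Y : Set (ℕ → A), ShiftSpace Y → Y ⊆ X → (∀ μ ∈ Msigma X, μ Y = 1) → C ⊆ Y

/-- Measure of the cylinder determined by a word of length `n`. -/
noncomputable def cylMeasure (μ : ProbabilityMeasure (ℕ → A)) {n : ℕ} (w : Fin n → A) : ℝ :=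
  ((μ : Measure (ℕ → A)) {x | ∀ k : Fin n, x (k : ℕ) = w k}).toReal

/-- Entropy of the partition into cylinders of length `n`. -/
noncomputable def blockEntropy (μ : ProbabilityMeasure (ℕ → A)) (n : ℕ) : ℝ :=
  -∑ w : Fin n → A, cylMeasure μ w * Real.log (cylMeasure μ w)

/-- Kolmogorov–Sinai entropy of a shift-invariant measure. -/
noncomputable def ksEntropy (μ : ProbabilityMeasure (ℕ → A)) : ℝ :=
  Filter.limsup (fun n => blockEntropy μ n / (n : ℝ)) Filter.atTop

/-- `μ` is ergodic for the shift. -/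
def ErgodicPM (μ : ProbabilityMeasure (ℕ → A)) : Prop :=
  Ergodic shift (μ : Measure (ℕ → A))

/-- Ergodic measures are entropy dense in `M_σ(X)`. -/
def EntropyDense (X : Set (ℕ → A)) : Prop :=
  ∀ μ ∈ Msigma X, ∀ U : Set (ProbabilityMeasure (ℕ → A)), IsOpen U → μ ∈ U →
    ∀ ε : ℝ, 0 < ε →
      ∃ ν ∈ Msigma X, ν ∈ U ∧ ErgodicPM ν ∧ |ksEntropy ν - ksEntropy μ| < ε

/-- Topological entropy of a shift space. -/
noncomputable def topEntropy (X : Set (ℕ → A)) : ℝ :=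
  Filter.limsup (fun n => Real.log (Nat.card ↥(langN n X)) / (n : ℝ)) Filter.atTop

/-- The standard metric on the full shift. -/
noncomputable def rho (x y : ℕ → A) : ℝ :=
  open scoped Classical in
  if x = y then 0 else (2 : ℝ) ^ (-((sInf {j : ℕ | x j ≠ y j} : ℕ) : ℤ))

/-- Proximality of a shift space. -/
def ProximalShift (X : Set (ℕ → A)) : Prop :=
  ∀ x ∈ X, ∀ y ∈ X,
    Filter.liminf (fun n => rho (shift^[n] x) (shift^[n] y)) Filter.atTop = 0

/-- Minimality of a shift space. -/
def MinimalShift (X : Set (ℕ → A)) : Prop :=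
  ShiftSpace X ∧ ∀ Y : Set (ℕ → A), ShiftSpace Y → Y ⊆ X → Y = X

/-- An `A`-labeled directed multigraph on vertices `V` with edges `E`. -/
structure LabeledGraph (A V E : Type*) where
  src : E → V
  dst : E → V
  lab : E → A

namespace LabeledGraph

variable {A' V E : Type*}

/-- `es` is a path in `G` from `u` to `v`. -/
def PathFromTo (G : LabeledGraph A' V E) (es : List E) (u v : V) : Prop :=
  es.Chain' (fun e f => G.dst e = G.src f) ∧
  es.head?.map G.src = some u ∧ es.getLast?.map G.dst = some v

/-- `G` is strongly connected. -/
def StronglyConnected (G : LabeledGraph A' V E) : Prop :=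
  ∀ u v : V, ∃ es : List E, G.PathFromTo es u v

/-- `d` is the period of `G`: the gcd of lengths of closed paths. -/
def HasPeriod (G : LabeledGraph A' V E) (d : ℕ) : Prop :=
  (∀ (es : List E) (u : V), G.PathFromTo es u u → d ∣ es.length) ∧
  ∀ d' : ℕ, (∀ (es : List E) (u : V), G.PathFromTo es u u → d' ∣ es.length) → d' ∣ d

/-- `b` is a safe symbol for `G`. -/
def SafeSymbol (G : LabeledGraph A' V E) (b : A') : Prop :=
  ∀ e : E, ∃ e' : E, G.src e' = G.src e ∧ G.dst e' = G.dst e ∧ G.lab e' = b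

/-- The shift space presented by the labeled graph `G`: labels read along infinite paths. -/
def presents (G : LabeledGraph A' V E) : Set (ℕ → A') :=
  {x | ∃ e : ℕ → E, (∀ j, G.dst (e j) = G.src (e (j + 1))) ∧ ∀ j, x j = G.lab (e j)}

end LabeledGraph

/-- The coupling of a family of labeled graphs: an edge labeled `a` from `v` to `v'` exists
iff each `G k` has an edge from `v k` to `v' k` labeled `a`. -/
def coupling {A' : Type*} {n : ℕ} {V E : Fin n → Type*}
    (G : ∀ k, LabeledGraph A' (V k) (E k)) :
    LabeledGraph A' (∀ k, V k) {p : (∀ k, E k) × A' // ∀ k, (G k).lab (p.1 k) = p.2} where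
  src p := fun k => (G k).src (p.1.1 k)
  dst p := fun k => (G k).dst (p.1.1 k)
  lab p := p.1.2

/-- Sofic shift spaces: those presented by some finite labeled graph. -/
def Sofic (X : Set (ℕ → A)) : Prop :=
  ∃ (V E : Type) (_ : Fintype V) (_ : Fintype E) (G : LabeledGraph A V E),
    X = G.presents

/-- The coded shift generated by a finite set of words `B`: the closure of the set of all
shifts of infinite concatenations of words from `B`. -/
def codedShift (B : Finset (List A)) : Set (ℕ → A) :=
  closure {x | ∃ (b : ℕ → List A) (k : ℕ), (∀ i, b i ∈ B) ∧ x = shift^[k] (concatSeq b)}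

/-! Inside the invariant measures, the sets `{ν | ν (U_n(X)) > 1 - δ}` form a neighborhood basis
of `M_σ(X)`. They are open because `U_n(X)` is clopen. Conversely, the `U_n(X)` decrease to `X`,
so on the invariant measures outside an open set `U ⊇ M_σ(X)` the values `ν (U_n(X))` decrease to
limits below `1`, and compactness of the space of invariant measures makes this uniform in `ν`. -/

section Orbits

variable {α : Type} {X : Set (ℕ → α)}

lemma iterate_shift_apply (x : ℕ → α) (i k : ℕ) : shift^[i] x k = x (i + k) := by
  induction i generalizing x with
  | zero => rw [Function.iterate_zero_apply, Nat.zero_add]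
  | succ i ih => rw [Function.iterate_succ_apply, ih, shift, Nat.add_right_comm]

lemma ofFn_mem_lang_iff {n : ℕ} {w : Fin n → α} :
    List.ofFn w ∈ lang X ↔ ∃ x ∈ X, ∃ i : ℕ, ∀ k : Fin n, w k = x (i + k) := by
  refine exists_congr fun x => and_congr_right fun _ => exists_congr fun i => ?_
  rw [List.ext_get_iff]
  simp only [List.length_ofFn, List.get_eq_getElem, List.getElem_ofFn, true_and]
  exact ⟨fun h k => h k k.2 k.2, fun h k hk _ => h ⟨k, hk⟩⟩

lemma mem_cylNbhd_iff {n : ℕ} {x : ℕ → α} :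
    x ∈ cylNbhd X n ↔ ∃ y ∈ ⋃ i, shift^[i] '' X, y ∈ PiNat.cylinder x n := by
  simp only [cylNbhd, Set.mem_ofPred_eq, ofFn_mem_lang_iff, Set.mem_iUnion, Set.mem_image,
    PiNat.mem_cylinder_iff, Fin.forall_iff]
  constructor
  · rintro ⟨y, hy, i, h⟩
    exact ⟨_, ⟨i, y, hy, rfl⟩, fun k hk => by rw [iterate_shift_apply, h k hk]⟩
  · rintro ⟨_, ⟨i, y, hy, rfl⟩, h⟩
    exact ⟨y, hy, i, fun k hk => by rw [← h k hk, iterate_shift_apply]⟩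

lemma antitone_cylNbhd (X : Set (ℕ → α)) : Antitone (cylNbhd X) := fun _ _ hmn x hx =>
  let ⟨y, hy, hxy⟩ := mem_cylNbhd_iff.1 hx
  mem_cylNbhd_iff.2 ⟨y, hy, PiNat.cylinder_anti x hmn hxy⟩

lemma subset_cylNbhd (X : Set (ℕ → α)) (n : ℕ) : X ⊆ cylNbhd X n := fun x hx =>
  mem_cylNbhd_iff.2 ⟨x, Set.mem_iUnion.2 ⟨0, x, hx, rfl⟩, PiNat.self_mem_cylinder x n⟩

lemma iUnion_image_iterate_shift (hX : Set.MapsTo shift X X) : ⋃ i, shift^[i] '' X = X :=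
  (Set.iUnion_subset fun i => (hX.iterate i).image_subset).antisymm
    fun x hx => Set.mem_iUnion.2 ⟨0, x, hx, rfl⟩

variable [TopologicalSpace α]

lemma continuous_shift : Continuous (shift : (ℕ → α) → ℕ → α) :=
  continuous_pi fun n => continuous_apply (n + 1)

variable [DiscreteTopology α]

lemma isClopen_cylNbhd (X : Set (ℕ → α)) (n : ℕ) : IsClopen (cylNbhd X n) :=
  have hprefix : Continuous fun (x : ℕ → α) (k : Fin n) => x k :=
    continuous_pi fun k => continuous_apply (k : ℕ)
  (isClopen_discrete {w : Fin n → α | List.ofFn w ∈ lang X}).preimage hprefix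

lemma iInter_cylNbhd (X : Set (ℕ → α)) :
    ⋂ n, cylNbhd X n = closure (⋃ i, shift^[i] '' X) := by
  ext x
  simp only [Set.mem_iInter, mem_cylNbhd_iff,
    (PiNat.isTopologicalBasis_cylinders fun _ => α).mem_closure_iff]
  constructor
  · rintro h _ ⟨z, n, rfl⟩ hxz
    obtain ⟨y, hy, hyx⟩ := h n
    exact ⟨y, PiNat.mem_cylinder_iff_eq.1 hxz ▸ hyx, hy⟩
  · intro h n
    obtain ⟨y, hyx, hy⟩ := h _ ⟨x, n, rfl⟩ (PiNat.self_mem_cylinder x n)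
    exact ⟨y, hy, hyx⟩

lemma ShiftSpace.iInter_cylNbhd_eq (hX : ShiftSpace X) : ⋂ n, cylNbhd X n = X := by
  rw [iInter_cylNbhd, iUnion_image_iterate_shift hX.2.2, hX.2.1.closure_eq]

end Orbits

section WeakConvergence

variable {Ω : Type*} [MeasurableSpace Ω]

lemma tendsto_probabilityMeasure_iInter (ν : ProbabilityMeasure Ω) {E : ℕ → Set Ω}
    (hE : ∀ n, MeasurableSet (E n)) (hanti : Antitone E) :
    Tendsto (fun n => (ν (E n) : ℝ)) atTop (𝓝 (ν (⋂ n, E n))) :=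
  (ENNReal.tendsto_toReal (measure_ne_top (ν : Measure Ω) _)).comp <|
    tendsto_measure_iInter_atTop (fun n => (hE n).nullMeasurableSet) hanti
      ⟨0, measure_ne_top (ν : Measure Ω) _⟩

variable [TopologicalSpace Ω] [HasOuterApproxClosed Ω]

lemma isClosed_setOf_map_eq [BorelSpace Ω] {f : Ω → Ω} (hf : Continuous f) :
    IsClosed {ν : ProbabilityMeasure Ω | (ν : Measure Ω).map f = ν} := by
  have hfixed : {ν : ProbabilityMeasure Ω | (ν : Measure Ω).map f = ν} =
      {ν | ν.map hf.measurable.aemeasurable = ν} :=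
    Set.ext fun ν => ProbabilityMeasure.toMeasure_injective.eq_iff
      (a := ν.map hf.measurable.aemeasurable)
  rw [hfixed]
  exact isClosed_eq (ProbabilityMeasure.continuous_map hf) continuous_id

variable [OpensMeasurableSpace Ω]

lemma continuous_probabilityMeasure_apply {E : Set Ω} (hE : IsClopen E) :
    Continuous fun ν : ProbabilityMeasure Ω => (ν E : ℝ) :=
  NNReal.continuous_coe.comp <| continuous_iff_continuousAt.2 fun _ =>
    ProbabilityMeasure.tendsto_measure_of_isClopen_of_tendsto tendsto_id hE

/- The part of `K` outside `U` is compact and covered by the increasing open sets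
`{ν | ν (E n) < 1 - 1 / (n + 1)}`, so a single one of them covers it. -/
lemma exists_forall_mem_of_lt_apply {K U : Set (ProbabilityMeasure Ω)} (hK : IsCompact K)
    (hU : IsOpen U) {E : ℕ → Set Ω} (hE : ∀ n, IsClopen (E n)) (hanti : Antitone E)
    (hKU : ∀ ν ∈ K, ν (⋂ n, E n) = 1 → ν ∈ U) :
    ∃ δ : ℝ, 0 < δ ∧ ∃ N : ℕ, ∀ ν ∈ K, ∀ n ≥ N, 1 - δ < ν (E n) → ν ∈ U := by
  let V : ℕ → Set (ProbabilityMeasure Ω) := fun n => {ν | (ν (E n) : ℝ) < 1 - 1 / ((n : ℝ) + 1)}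
  have apply_anti (ν : ProbabilityMeasure Ω) {m n : ℕ} (hmn : m ≤ n) :
      (ν (E n) : ℝ) ≤ ν (E m) := NNReal.coe_le_coe.2 (ν.apply_mono (hanti hmn))
  have isOpen_V (n : ℕ) : IsOpen (V n) :=
    isOpen_lt (continuous_probabilityMeasure_apply (hE n)) continuous_const
  have monotone_V : Monotone V := fun m n hmn ν hν =>
    (apply_anti ν hmn).trans_lt (hν.trans_le (sub_le_sub_left (Nat.one_div_le_one_div hmn) 1))
  have cover : K \ U ⊆ ⋃ n, V n := by
    rintro ν ⟨hνK, hνU⟩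
    have hlt : (ν (⋂ n, E n) : ℝ) + 0 < 1 := by
      rw [add_zero, NNReal.coe_lt_one]
      exact (ν.apply_le_one _).lt_of_ne fun h => hνU (hKU ν hνK h)
    have hlim := (tendsto_probabilityMeasure_iInter ν (fun n => (hE n).1.measurableSet) hanti).add
      tendsto_one_div_add_atTop_nhds_zero_nat
    obtain ⟨n, hn⟩ := (hlim.eventually_lt_const hlt).exists
    exact Set.mem_iUnion.2 ⟨n, lt_sub_iff_add_lt.2 hn⟩
  obtain ⟨N, hN⟩ := (hK.diff hU).elim_directed_cover V isOpen_V cover monotone_V.directed_le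
  refine ⟨1 / ((N : ℝ) + 1), Nat.one_div_pos_of_nat, N, fun ν hνK n hn hlt => ?_⟩
  by_contra hνU
  exact (hlt.trans_le (apply_anti ν hn)).not_gt (hN ⟨hνK, hνU⟩)

end WeakConvergence

section Joinings

variable {α : Type} [MeasurableSpace α] {μ ν : ProbabilityMeasure (ℕ → α)}

lemma measurable_shift : Measurable (shift : (ℕ → α) → ℕ → α) :=
  measurable_pi_lambda _ fun n => measurable_pi_apply (n + 1)

lemma IsJoining.swap {ξ : Measure ((ℕ → α) × (ℕ → α))} (h : IsJoining ξ μ ν) :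
    IsJoining (ξ.map Prod.swap) ν μ := by
  have hshift := (measurable_shift (α := α)).prodMap (measurable_shift (α := α))
  refine ⟨?_, ?_, ?_⟩
  · calc (ξ.map Prod.swap).map (Prod.map shift shift)
        = (ξ.map (Prod.map shift shift)).map Prod.swap := by
          rw [Measure.map_map hshift measurable_swap, Measure.map_map measurable_swap hshift,
            Prod.map_comp_swap]
      _ = ξ.map Prod.swap := by rw [h.1]
  · rw [Measure.map_map measurable_fst measurable_swap]
    exact h.2.2
  · rw [Measure.map_map measurable_snd measurable_swap]
    exact h.2.1

lemma dbarM_comm (μ ν : ProbabilityMeasure (ℕ → α)) : dbarM μ ν = dbarM ν μ := by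
  have swap_apply (ξ : Measure ((ℕ → α) × (ℕ → α))) :
      ξ.map Prod.swap {p | p.1 0 ≠ p.2 0} = ξ {p | p.1 0 ≠ p.2 0} := by
    refine (MeasurableEquiv.prodComm.map_apply _).trans (congrArg ξ ?_)
    exact Set.ext fun p => ne_comm
  refine congrArg sInf (Set.ext fun r => ⟨?_, ?_⟩) <;>
  · rintro ⟨ξ, hξ, rfl⟩
    exact ⟨_, hξ.swap, by rw [swap_apply]⟩

lemma dbarM_nonneg (μ ν : ProbabilityMeasure (ℕ → α)) : 0 ≤ dbarM μ ν :=
  Real.sInf_nonneg (by rintro _ ⟨ξ, -, rfl⟩; exact ENNReal.toReal_nonneg)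

lemma sInf_dbarM_lt_iff {S : Set (ProbabilityMeasure (ℕ → α))} (hS : S.Nonempty) {ε : ℝ} :
    sInf {r : ℝ | ∃ μ ∈ S, r = dbarM ν μ} < ε ↔ ∃ μ ∈ S, dbarM μ ν < ε := by
  have hbdd : BddBelow {r : ℝ | ∃ μ ∈ S, r = dbarM ν μ} :=
    ⟨0, by rintro _ ⟨μ, -, rfl⟩; exact dbarM_nonneg ν μ⟩
  have hne : {r : ℝ | ∃ μ ∈ S, r = dbarM ν μ}.Nonempty :=
    let ⟨μ, hμ⟩ := hS; ⟨_, μ, hμ, rfl⟩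
  rw [csInf_lt_iff hbdd hne]
  constructor
  · rintro ⟨_, ⟨μ, hμ, rfl⟩, hlt⟩
    exact ⟨μ, hμ, dbarM_comm ν μ ▸ hlt⟩
  · rintro ⟨μ, hμ, hlt⟩
    exact ⟨_, ⟨μ, hμ, rfl⟩, dbarM_comm μ ν ▸ hlt⟩

end Joinings

section Neighborhoods

variable {α : Type} [MeasurableSpace α] {X : Set (ℕ → α)}

lemma apply_cylNbhd_eq_one {μ : ProbabilityMeasure (ℕ → α)} (hμ : μ ∈ Msigma X) (n : ℕ) :
    μ (cylNbhd X n) = 1 :=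
  (μ.apply_le_one _).antisymm (hμ.2.symm.trans_le (μ.apply_mono (subset_cylNbhd X n)))

variable [Finite α] [TopologicalSpace α] [DiscreteTopology α] [MeasurableSingletonClass α]

lemma isOpen_setOf_lt_apply_cylNbhd (X : Set (ℕ → α)) (n : ℕ) (c : ℝ) :
    IsOpen {ν : ProbabilityMeasure (ℕ → α) | c < (ν (cylNbhd X n) : ℝ)} :=
  isOpen_lt continuous_const (continuous_probabilityMeasure_apply (isClopen_cylNbhd X n))

lemma ShiftSpace.exists_forall_mem_of_lt_apply_cylNbhd (hX : ShiftSpace X)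
    {U : Set (ProbabilityMeasure (ℕ → α))} (hU : IsOpen U) (hXU : Msigma X ⊆ U) :
    ∃ δ : ℝ, 0 < δ ∧ ∃ N : ℕ, ∀ ν : ProbabilityMeasure (ℕ → α), invariantPM ν →
      ∀ n ≥ N, 1 - δ < ν (cylNbhd X n) → ν ∈ U :=
  exists_forall_mem_of_lt_apply (isClosed_setOf_map_eq continuous_shift).isCompact hU
    (isClopen_cylNbhd X) (antitone_cylNbhd X) fun _ hν hνX =>
      hXU ⟨hν, hX.iInter_cylNbhd_eq ▸ hνX⟩

end Neighborhoods

/-- A shift space `X` is `d̄_M`-stable iff for every `ε > 0` there exist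
`δ > 0` and `N ∈ ℕ` such that for every shift-invariant probability measure `ν` and every
`n ≥ N`, if `ν(U_n(X)) > 1 − δ` then `inf_{μ ∈ M_σ(X)} d̄_M(ν, μ) < ε`. -/
theorem statement0 (hA : 2 ≤ Fintype.card A) (X : Set (ℕ → A)) (hX : ShiftSpace X) :
    DbarMStable X ↔
      ∀ ε : ℝ, 0 < ε → ∃ (δ : ℝ) (N : ℕ), 0 < δ ∧ 0 < N ∧
        ∀ ν : ProbabilityMeasure (ℕ → A), invariantPM ν → ∀ n : ℕ, N ≤ n →
          1 - δ < ((ν (cylNbhd X n) : NNReal) : ℝ) →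
          sInf {r : ℝ | ∃ μ ∈ Msigma X, r = dbarM ν μ} < ε := by
  constructor
  · intro hstable ε hε
    obtain ⟨U, hU, hXU, hUclose⟩ := hstable ε hε
    obtain ⟨δ, hδ, N, hN⟩ := hX.exists_forall_mem_of_lt_apply_cylNbhd hU hXU
    refine ⟨δ, N + 1, hδ, N.succ_pos, fun ν hν n hn hlt => ?_⟩
    obtain ⟨μ, hμ, hμν⟩ := hUclose ν (hN ν hν n (Nat.le_of_succ_le hn) hlt) hν
    exact (sInf_dbarM_lt_iff ⟨μ, hμ⟩).2 ⟨μ, hμ, hμν⟩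
  · intro hclose ε hε
    obtain ⟨δ, N, hδ, -, hN⟩ := hclose ε hε
    rcases (Msigma X).eq_empty_or_nonempty with hempty | hne
    · exact ⟨∅, isOpen_empty, hempty.subset, fun _ hν => hν.elim⟩
    refine ⟨_, isOpen_setOf_lt_apply_cylNbhd X N (1 - δ), fun μ hμ => ?_,
      fun ν hνU hν => (sInf_dbarM_lt_iff hne).1 (hN ν hν N le_rfl hνU)⟩
    rw [Set.mem_ofPred_eq, apply_cylNbhd_eq_one hμ, NNReal.coe_one]
    exact sub_lt_self 1 hδ

end DbarPaper
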